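/- Let n be a positive integer. Then 2·δ(n) ≤ n if and only if n ∉ {1, 8, 9, 12, 15} and n is not of the form p or 2p for any prime p. Moreover, 2·δ(n) = n if and only if n ∈ {16, 18}. -/

import Mathlib

/-- `staircaseDelta n` is the minimum of `r + s` over all pairs of positive
integers `(r, s)` with `r ≤ s` and `r * s = n`. -/
noncomputable def staircaseDelta (n : ℕ) : ℕ :=
  sInf {w : ℕ | ∃ r s : ℕ, 0 < r ∧ r ≤ s ∧ r * s = n ∧ w = r + s}

theorem delta_le {n r s : ℕ} (hr : 0 < r) (hs : 0 < s) (h : r * s = n) :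
    staircaseDelta n ≤ r + s := by
  unfold staircaseDelta
  rcases le_total r s with hl | hl
  · exact Nat.sInf_le ⟨r, s, hr, hl, h, rfl⟩
  · exact Nat.sInf_le ⟨s, r, hs, hl, by rw [mul_comm]; exact h, by omega⟩

theorem delta_spec {n : ℕ} (hn : 0 < n) :
    ∃ r s : ℕ, 0 < r ∧ r ≤ s ∧ r * s = n ∧ staircaseDelta n = r + s := by
  have h : {w : ℕ | ∃ r s : ℕ, 0 < r ∧ r ≤ s ∧ r * s = n ∧ w = r + s}.Nonempty :=
    ⟨1 + n, 1, n, one_pos, hn, one_mul n, rfl⟩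
  exact Nat.sInf_mem h

/-- a composite number splits as a product of two factors at least two -/
theorem split_comp {m : ℕ} (h1 : 2 ≤ m) (hp : ¬ m.Prime) :
    ∃ c d : ℕ, 2 ≤ c ∧ c ≤ d ∧ c * d = m ∧ c = m.minFac := by
  refine ⟨m.minFac, m / m.minFac, (Nat.minFac_prime (by omega)).two_le,
    Nat.minFac_le_div (by omega) hp, Nat.mul_div_cancel' (Nat.minFac_dvd m), rfl⟩

theorem exists_split {n : ℕ} (hn : 0 < n) (h1 : n ≠ 1) (h8 : n ≠ 8) (h9 : n ≠ 9)
    (h12 : n ≠ 12) (h15 : n ≠ 15)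
    (hp : ∀ p : ℕ, Nat.Prime p → n ≠ p ∧ n ≠ 2 * p) :
    ∃ r s : ℕ, 0 < r ∧ 0 < s ∧ r * s = n ∧ 2 * (r + s) ≤ n := by
  have hnp : ¬ n.Prime := fun h => (hp n h).1 rfl
  obtain ⟨a, b, ha, hab, rfl, -⟩ := split_comp (by omega) hnp
  rcases Nat.lt_or_ge a 3 with h3 | h3
  · obtain rfl : a = 2 := by omega
    have hbp : ¬ b.Prime := fun h => (hp b h).2 rfl
    obtain ⟨c, d, hc, hcd, rfl, -⟩ := split_comp hab hbp
    refine ⟨2 * c, d, by omega, by omega, by ring, ?_⟩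
    rcases Nat.lt_or_ge d 4 with hd | hd
    · have : c < 4 := by omega
      interval_cases d <;> interval_cases c <;> omega
    · nlinarith
  · refine ⟨a, b, by omega, by omega, rfl, ?_⟩
    rcases Nat.lt_or_ge a 4 with h4 | h4
    · obtain rfl : a = 3 := by omega
      omega
    · nlinarith

theorem stmt9 (n : ℕ) (hn : 0 < n) :
    (2 * staircaseDelta n ≤ n ↔
      n ∉ ({1, 8, 9, 12, 15} : Set ℕ) ∧ ∀ p : ℕ, Nat.Prime p → n ≠ p ∧ n ≠ 2 * p) ∧
    (2 * staircaseDelta n = n ↔ n = 16 ∨ n = 18) := by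
  obtain ⟨r, s, hr, hrs, hmul, hd⟩ := delta_spec hn
  have big : 2 * (r + s) ≤ r * s → 3 ≤ r := by
    intro h
    by_contra hc
    have : r < 3 := by omega
    interval_cases r <;> omega
  refine ⟨⟨?_, ?_⟩, ⟨?_, ?_⟩⟩
  · intro h
    rw [hd] at h
    have h' : 2 * (r + s) ≤ r * s := by omega
    have hr3 := big h'
    refine ⟨?_, ?_⟩
    · intro hm
      simp only [Set.mem_insert_iff, Set.mem_singleton_iff] at hm
      have hs5 : s < 6 := by
        by_contra hc
        have : 6 ≤ s := by omega
        have : 3 * 6 ≤ r * s := Nat.mul_le_mul hr3 this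
        omega
      have hr5 : r < 6 := by omega
      interval_cases s <;> interval_cases r <;> omega
    · intro p pp
      refine ⟨?_, ?_⟩
      · intro hnp
        have : r ∣ p := ⟨s, by omega⟩
        rcases (Nat.dvd_prime pp).1 this with h1 | h1
        · omega
        · have : r * 1 < r * s := Nat.mul_lt_mul_of_pos_left (by omega) hr
          omega
      · intro hnp
        have hdv : p ∣ r * s := ⟨2, by omega⟩
        have hp0 := pp.pos
        rcases (Nat.Prime.dvd_mul pp).1 hdv with ⟨k, hk⟩ | ⟨k, hk⟩
        · have : p * (k * s) = p * 2 := by rw [← mul_assoc, ← hk]; omega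
          have h2 := Nat.eq_of_mul_eq_mul_left hp0 this
          have : s ≤ 2 := Nat.le_of_dvd (by norm_num) ⟨k, by rw [← h2, mul_comm]⟩
          omega
        · have : p * (k * r) = p * 2 := by
            rw [← mul_assoc, ← hk, mul_comm s r]; omega
          have h2 := Nat.eq_of_mul_eq_mul_left hp0 this
          have : r ≤ 2 := Nat.le_of_dvd (by norm_num) ⟨k, by rw [← h2, mul_comm]⟩
          omega
  · rintro ⟨hm, hp⟩
    simp only [Set.mem_insert_iff, Set.mem_singleton_iff, not_or] at hm
    obtain ⟨h1, h8, h9, h12, h15⟩ := hm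
    obtain ⟨x, y, hx, hy, hxy, hle⟩ := exists_split hn h1 h8 h9 h12 h15 hp
    have := delta_le hx hy hxy
    omega
  · intro h
    rw [hd] at h
    have h' : 2 * (r + s) = r * s := by omega
    have hr3 := big h'.le
    have hr4 : r < 5 := by
      by_contra hc
      have : 5 ≤ r := by omega
      nlinarith
    interval_cases r <;> omega
  · rintro (rfl | rfl)
    · have := delta_le (n := 16) (r := 4) (s := 4) (by norm_num) (by norm_num) (by norm_num)
      have : 8 ≤ r + s := by
        by_contra hc
        have : r + s ≤ 7 := by omega
        have : r < 4 := by omega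
        interval_cases r <;> omega
      omega
    · have := delta_le (n := 18) (r := 3) (s := 6) (by norm_num) (by norm_num) (by norm_num)
      have : 9 ≤ r + s := by
        by_contra hc
        have : r + s ≤ 8 := by omega
        have : r < 5 := by omega
        interval_cases r <;> omega
      omega
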